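/- arXiv:1009.0382 — 7 statements merged into one kernel-verified Lean document; each statement's English description precedes it below -/
import Mathlib

section
/- Let d, n be positive integers, m_1,…,m_n ∈ ℕ^d, let s_1,…,s_n ∈ ℕ and set m = s_1m_1 + ⋯ + s_nm_n. Let ℓ be a positive integer such that gcd(ℓ, m_j) = 1 for some component m_j of m. Then, inside ℤ^d, the intersection of the subgroup generated by ℓm_1,…,ℓm_n with the subgroup generated by m equals the subgroup generated by ℓm (i.e., ℤ{ℓm_1,…,ℓm_n} ∩ ℤ{m} = ℤ(ℓm), so the semigroup S_{ℓ,m} generated by ℓm_1,…,ℓm_n, m is the gluing of ℕ{ℓm_1,…,ℓm_n} and ℕ{m}). -/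
/-- For positive integers `d, n`, vectors `m 1, …, m n ∈ ℕ^d`,
`m = s 1 • m 1 + ⋯ + s n • m n`, and a positive integer `ℓ` coprime to some
component of `m`, the intersection (inside `ℤ^d`) of the subgroup generated by
`ℓ•m 1, …, ℓ•m n` with the subgroup generated by `m` equals the subgroup
generated by `ℓ•m`. -/
theorem stmt_0 (d n : ℕ) (hd : 0 < d) (hn : 0 < n)
    (m : Fin n → Fin d → ℕ) (s : Fin n → ℕ) (ℓ : ℕ) (hℓ : 0 < ℓ)
    (mm : Fin d → ℕ) (hmm : mm = ∑ i, s i • m i)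
    (hgcd : ∃ j, Nat.gcd ℓ (mm j) = 1) :
    (Submodule.span ℤ (Set.range fun i : Fin n => fun j : Fin d => (ℓ : ℤ) * (m i j : ℤ)) ⊓
        Submodule.span ℤ {fun j : Fin d => (mm j : ℤ)} : Submodule ℤ (Fin d → ℤ)) =
      Submodule.span ℤ {fun j : Fin d => (ℓ : ℤ) * (mm j : ℤ)} := by
  obtain ⟨j, hj⟩ := hgcd
  apply le_antisymm
  · rintro x ⟨hx1, hx2⟩
    obtain ⟨a, rfl⟩ := Submodule.mem_span_singleton.1 hx2
    obtain ⟨c, hc⟩ := (Submodule.mem_span_range_iff_exists_fun ℤ).1 hx1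
    have h1 := congrFun hc j
    simp only [Finset.sum_apply, Pi.smul_apply, smul_eq_mul] at h1
    have h2 : (ℓ : ℤ) ∣ a * (mm j : ℤ) := by
      rw [← h1]
      exact Finset.dvd_sum fun i _ => Dvd.intro (c i * (m i j : ℤ)) (by ring)
    have h3 : IsCoprime (ℓ : ℤ) (mm j : ℤ) := Nat.isCoprime_iff_coprime.2 hj
    obtain ⟨b, rfl⟩ := h3.dvd_of_dvd_mul_right h2
    refine Submodule.mem_span_singleton.2 ⟨b, ?_⟩
    ext k
    simp only [Pi.smul_apply, smul_eq_mul]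
    ring
  · rw [Submodule.span_singleton_le_iff_mem]
    refine ⟨(Submodule.mem_span_range_iff_exists_fun ℤ).2 ⟨fun i => (s i : ℤ), ?_⟩,
      Submodule.mem_span_singleton.2 ⟨(ℓ : ℤ), ?_⟩⟩
    · ext k
      simp only [hmm, Finset.sum_apply, Pi.smul_apply, smul_eq_mul]
      push_cast
      rw [Finset.mul_sum]
      exact Finset.sum_congr rfl fun i _ => by ring
    · ext k
      simp only [Pi.smul_apply, smul_eq_mul]
end

section
/- Let m_1,…,m_n ∈ ℕ^d, let s_1,…,s_n ∈ ℕ, set m = s_1m_1 + ⋯ + s_nm_n, and let ℓ be a positive integer such that gcd(ℓ, m_j) = 1 for some component m_j of m. Then I_{S_{ℓ,m}} = ι(I_S) + ⟨F⟩, i.e. the kernel of ψ equals the ideal of K[x_1,…,x_{n+1}] generated by the image under ι of the kernel of φ together with the binomial F = x_{n+1}^ℓ − x_1^{s_1}⋯x_n^{s_n}. -/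
open MvPolynomial

theorem aux_decomp {K : Type*} [Field K] {n : ℕ} (k : ℕ) (g : MvPolynomial (Fin n) K)
    (p : MvPolynomial (Fin (n + 1)) K) :
    ∃ q : ℕ → MvPolynomial (Fin n) K,
      p - ∑ r ∈ Finset.range (k + 1), rename Fin.castSucc (q r) * X (Fin.last n) ^ r ∈
        Ideal.span {(X (Fin.last n) ^ (k + 1) - rename Fin.castSucc g :
          MvPolynomial (Fin (n + 1)) K)} := by
  induction p using MvPolynomial.induction_on with
  | C a =>
    refine ⟨fun r => if r = 0 then C a else 0, ?_⟩
    rw [Finset.sum_range_succ']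
    simp
  | add p p' h h' =>
    obtain ⟨q, hq⟩ := h
    obtain ⟨q', hq'⟩ := h'
    refine ⟨fun r => q r + q' r, ?_⟩
    convert Ideal.add_mem _ hq hq' using 1
    simp only [map_add, add_mul, Finset.sum_add_distrib]
    ring
  | mul_X p i h =>
    obtain ⟨q, hq⟩ := h
    induction i using Fin.lastCases with
    | last =>
      refine ⟨fun r => Nat.casesOn r (q k * g) q, ?_⟩
      have h2 := Ideal.mul_mem_left _ (X (Fin.last n)) hq
      have h3 := Ideal.mul_mem_left _ (rename Fin.castSucc (q k))
        (Ideal.mem_span_singleton_self (X (Fin.last n) ^ (k + 1) - rename Fin.castSucc g :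
          MvPolynomial (Fin (n + 1)) K))
      convert Ideal.add_mem _ h2 h3 using 1
      rw [Finset.sum_range_succ', Finset.sum_range_succ]
      simp only [pow_succ, ← mul_assoc, ← Finset.sum_mul]
      have e0 : rename (Fin.castSucc : Fin n → Fin (n + 1))
          (Nat.rec (q k * g) (fun a _ => q a) 0 : MvPolynomial (Fin n) K) =
          rename Fin.castSucc (q k) * rename Fin.castSucc g := map_mul _ _ _
      rw [e0]
      ring
    | cast i =>
      refine ⟨fun r => q r * X i, ?_⟩
      convert Ideal.mul_mem_left _ (X i.castSucc) hq using 1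
      simp only [map_mul, rename_X, mul_sub, Finset.mul_sum]
      congr 1
      · ring
      · exact Finset.sum_congr rfl fun _ _ => by ring

theorem aux_indep {K : Type*} [Field K] {d : ℕ} (ℓ : ℕ) (hℓ : 0 < ℓ) (M : Fin d →₀ ℕ)
    (j : Fin d) (hj : Nat.gcd ℓ (M j) = 1) (f : ℕ → MvPolynomial (Fin d) K)
    (h : ∑ r ∈ Finset.range ℓ, expand ℓ (f r) * monomial (r • M) 1 = 0)
    (r : ℕ) (hr : r < ℓ) : f r = 0 := by
  ext u
  have h1 := congrArg (coeff (ℓ • u + r • M)) h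
  rw [coeff_sum, Finset.sum_eq_single r] at h1
  · rw [coeff_mul_monomial, coeff_expand_smul _ hℓ.ne'] at h1
    simpa using h1
  · intro r' hr' hne
    rw [coeff_mul_monomial']
    split_ifs with hle
    · rw [coeff_expand_of_not_dvd (i := j), zero_mul]
      intro hd
      have hlej := hle j
      simp only [Finsupp.coe_tsub, Finsupp.coe_add, Finsupp.coe_smul, Pi.sub_apply, Pi.add_apply,
        Pi.smul_apply, smul_eq_mul] at hd hlej
      apply hne
      have hmod : r' * M j ≡ r * M j [MOD ℓ] := by
        have := (Nat.modEq_iff_dvd' hlej).2 hd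
        refine this.trans ?_
        simp [Nat.ModEq]
      have := Nat.ModEq.cancel_right_of_coprime hj hmod
      exact Nat.ModEq.eq_of_lt_of_lt this (Finset.mem_range.1 hr') hr
    · rfl
  · intro h; exact absurd (Finset.mem_range.2 hr) h

/-- `I_{S_{ℓ,m}} = ι(I_S) + ⟨F⟩` where
`F = x_{n+1}^ℓ − x_1^{s_1}⋯x_n^{s_n}`, when `ℓ` is a positive integer coprime
to some component of `m = s_1 m_1 + ⋯ + s_n m_n`. -/
theorem stmt_1 (K : Type*) [Field K] (d n : ℕ)
    (m : Fin n → Fin d → ℕ) (s : Fin n → ℕ) (ℓ : ℕ) (hℓ : 0 < ℓ)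
    (hgcd : ∃ j : Fin d, Nat.gcd ℓ (∑ i, s i * m i j) = 1)
    (φ : MvPolynomial (Fin n) K →ₐ[K] MvPolynomial (Fin d) K)
    (hφ : φ = aeval fun i : Fin n => ∏ j : Fin d, X j ^ m i j)
    (ψ : MvPolynomial (Fin (n + 1)) K →ₐ[K] MvPolynomial (Fin d) K)
    (hψ : ψ = aeval fun i : Fin (n + 1) =>
      Fin.lastCases (∏ j : Fin d, X j ^ (∑ i', s i' * m i' j))
        (fun i' : Fin n => ∏ j : Fin d, X j ^ (ℓ * m i' j)) i)
    (F : MvPolynomial (Fin (n + 1)) K)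
    (hF : F = X (Fin.last n) ^ ℓ - ∏ i : Fin n, X i.castSucc ^ s i) :
    RingHom.ker ψ =
      Ideal.map (rename (Fin.castSucc : Fin n → Fin (n + 1))) (RingHom.ker φ) ⊔
        Ideal.span {F} := by
  have hcomp : ∀ q, ψ (rename Fin.castSucc q) = expand ℓ (φ q) := by
    intro q
    have : ψ.comp (rename Fin.castSucc) = (expand ℓ).comp φ := by
      subst hφ hψ
      ext i : 1
      simp [pow_mul]
    exact DFunLike.congr_fun this q
  have hlast : ψ (X (Fin.last n)) = ∏ j : Fin d, X j ^ (∑ i', s i' * m i' j) := by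
    subst hψ; simp
  have hFψ : ψ F = 0 := by
    have e : (∏ i : Fin n, X i.castSucc ^ s i : MvPolynomial (Fin (n+1)) K) =
      rename Fin.castSucc (∏ i : Fin n, X i ^ s i) := by simp
    rw [hF, e, map_sub, hcomp, map_pow, hlast, hφ, sub_eq_zero]
    simp only [map_prod, map_pow, aeval_X, expand_X, ← Finset.prod_pow, ← pow_mul]
    rw [Finset.prod_comm]
    refine Finset.prod_congr rfl fun j _ => ?_
    rw [Finset.prod_pow_eq_pow_sum, Finset.sum_mul]
    congr 1
    exact Finset.sum_congr rfl fun i _ => by ring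
  apply le_antisymm
  · intro p hp
    rw [RingHom.mem_ker] at hp
    obtain ⟨k, rfl⟩ : ∃ k, ℓ = k + 1 := ⟨ℓ - 1, by omega⟩
    obtain ⟨q, hq⟩ := aux_decomp k (∏ i : Fin n, X i ^ s i) p
    have e : (X (Fin.last n) ^ (k + 1) - rename Fin.castSucc (∏ i : Fin n, X i ^ s i) :
          MvPolynomial (Fin (n + 1)) K) = F := by rw [hF]; simp
    rw [e] at hq
    have h0 : ψ (p - ∑ r ∈ Finset.range (k + 1),
        rename Fin.castSucc (q r) * X (Fin.last n) ^ r) = 0 := by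
      obtain ⟨c, hc⟩ := Ideal.mem_span_singleton'.1 hq
      rw [← hc, map_mul, hFψ, mul_zero]
    obtain ⟨j, hj⟩ := hgcd
    have hz := aux_indep (k + 1) hℓ
      (Finsupp.equivFunOnFinite.symm fun j => ∑ i, s i * m i j) j (by simpa using hj)
      (fun r => φ (q r)) (by
        rw [map_sub, hp, zero_sub, neg_eq_zero, map_sum] at h0
        rw [← h0]
        refine Finset.sum_congr rfl fun r _ => ?_
        rw [map_mul, hcomp, map_pow, hlast]
        congr 1
        rw [← Finset.prod_pow, monomial_eq, Finsupp.prod_fintype _ _ (by simp)]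
        simp [← pow_mul, mul_comm])
    rw [← sub_add_cancel p (∑ r ∈ Finset.range (k + 1),
        rename Fin.castSucc (q r) * X (Fin.last n) ^ r)]
    refine Ideal.add_mem _ (Ideal.mem_sup_right hq) (Ideal.mem_sup_left (Ideal.sum_mem _ fun r hr => Ideal.mul_mem_right _ _ ?_))
    exact Ideal.mem_map_of_mem _ (hz r (Finset.mem_range.1 hr))
  · refine sup_le (Ideal.map_le_iff_le_comap.2 fun q hq => ?_)
      ((Ideal.span_singleton_le_iff_mem _).2 hFψ)
    rw [RingHom.mem_ker] at hq
    rw [Ideal.mem_comap, RingHom.mem_ker, hcomp, hq, map_zero]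
end

section
/- Let m_1,…,m_n ∈ ℕ^d, let s_1,…,s_n ∈ ℕ, set m = s_1m_1 + ⋯ + s_nm_n and δ = s_1 + ⋯ + s_n, and let ℓ be a positive integer with ℓ ≥ δ such that gcd(ℓ, m_j) = 1 for some component m_j of m. Then I_{S̄_{ℓ,m}} = ῑ(I_{S̄}) + ⟨F⟩, i.e. the kernel of ψ̄ equals the ideal of K[x_0,…,x_{n+1}] generated by the image under ῑ of the kernel of φ̄ together with the homogeneous binomial F = x_{n+1}^ℓ − x_0^{ℓ−δ}x_1^{s_1}⋯x_n^{s_n}. -/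
open MvPolynomial

/-- Division with remainder by `x_last^ℓ - M`. -/
theorem div_aux {K : Type*} [Field K] (n ℓ : ℕ) (hℓ : 0 < ℓ)
    (M : MvPolynomial (Fin (n + 1)) K) (f : MvPolynomial (Fin (n + 2)) K) :
    ∃ g : ℕ → MvPolynomial (Fin (n + 1)) K,
      f - ∑ k ∈ Finset.range ℓ, rename (Fin.castSucc : Fin (n + 1) → Fin (n + 2)) (g k) *
        X (Fin.last (n + 1)) ^ k ∈
        Ideal.span {X (Fin.last (n + 1)) ^ ℓ -
          rename (Fin.castSucc : Fin (n + 1) → Fin (n + 2)) M} := by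
  obtain ⟨p, rfl⟩ : ∃ p, ℓ = p + 1 := ⟨ℓ - 1, by omega⟩
  induction f using MvPolynomial.induction_on with
  | C a =>
    refine ⟨fun k => if k = 0 then C a else 0, ?_⟩
    simp [Finset.sum_range_succ']
  | add f₁ f₂ h₁ h₂ =>
    obtain ⟨g₁, h₁⟩ := h₁
    obtain ⟨g₂, h₂⟩ := h₂
    refine ⟨fun k => g₁ k + g₂ k, ?_⟩
    have := Ideal.add_mem _ h₁ h₂
    convert this using 1
    simp only [map_add, add_mul, Finset.sum_add_distrib]
    ring
  | mul_X f i h =>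
    obtain ⟨g, h⟩ := h
    induction i using Fin.lastCases with
    | cast i =>
      refine ⟨fun k => g k * X i, ?_⟩
      convert Ideal.mul_mem_right (X i.castSucc) _ h using 1
      rw [sub_mul, Finset.sum_mul]
      congr 1
      refine Finset.sum_congr rfl fun k _ => ?_
      simp only [map_mul, rename_X]
      ring
    | last =>
      refine ⟨fun k => if k = 0 then g p * M else g (k - 1), ?_⟩
      have h2 := Ideal.mul_mem_right (X (Fin.last (n + 1))) _ h
      have h3 := Ideal.mul_mem_left _
        (rename (Fin.castSucc : Fin (n + 1) → Fin (n + 2)) (g p))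
        (Ideal.mem_span_singleton_self (X (Fin.last (n + 1)) ^ (p + 1) -
          rename (Fin.castSucc : Fin (n + 1) → Fin (n + 2)) M))
      convert Ideal.add_mem _ h2 h3 using 1
      rw [Finset.sum_range_succ', Finset.sum_range_succ, sub_mul, add_mul, Finset.sum_mul]
      simp only [Nat.add_eq_zero_iff, one_ne_zero, and_false, if_false, if_true,
        Nat.add_sub_cancel, map_mul, pow_succ, mul_assoc, pow_zero]
      ring

/-- `t_j ↦ t_j^ℓ`, `u ↦ u`. -/
noncomputable def tauMap (K : Type*) [Field K] (d ℓ : ℕ) :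
    MvPolynomial (Fin (d + 1)) K →ₐ[K] MvPolynomial (Fin (d + 1)) K :=
  aeval fun i => Fin.lastCases (X (Fin.last d)) (fun j : Fin d => X j.castSucc ^ ℓ) i

theorem tauMap_inj (K : Type*) [Field K] (d ℓ : ℕ) (hℓ : 0 < ℓ) :
    Function.Injective (tauMap K d ℓ) := by
  let σ : MvPolynomial (Fin (d + 1)) K →ₐ[K] MvPolynomial (Fin (d + 1)) K :=
    aeval fun i => Fin.lastCases (X (Fin.last d) ^ ℓ) (fun j : Fin d => X j.castSucc) i
  have h : σ.comp (tauMap K d ℓ) = expand ℓ := by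
    apply MvPolynomial.algHom_ext
    intro i
    induction i using Fin.lastCases <;> simp [σ, tauMap]
  have h2 : Function.Injective (σ.comp (tauMap K d ℓ)) := by
    rw [h]
    exact expand_injective hℓ
  exact Function.Injective.of_comp (f := σ) h2

theorem tauMap_hom (K : Type*) [Field K] (d ℓ : ℕ) (j : Fin d)
    (p : MvPolynomial (Fin (d + 1)) K) :
    IsWeightedHomogeneous (Pi.single j.castSucc (1 : ZMod ℓ)) (tauMap K d ℓ p) 0 := by
  induction p using MvPolynomial.induction_on with
  | C a => simpa [tauMap, algebraMap_eq] using isWeightedHomogeneous_C _ a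
  | add p q hp hq => rw [map_add]; exact hp.add hq
  | mul_X p i hp =>
    rw [map_mul]
    have : IsWeightedHomogeneous (Pi.single j.castSucc (1 : ZMod ℓ)) (tauMap K d ℓ (X i)) 0 := by
      induction i using Fin.lastCases with
      | last =>
        have := isWeightedHomogeneous_X K (Pi.single j.castSucc (1 : ZMod ℓ)) (Fin.last d)
        simpa [tauMap, Pi.single_apply, (Fin.castSucc_lt_last j).ne'] using this
      | cast i =>
        have := (isWeightedHomogeneous_X K (Pi.single j.castSucc (1 : ZMod ℓ)) i.castSucc).pow ℓ
        simpa [tauMap] using this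
    simpa using hp.mul this

theorem indep_aux (K : Type*) [Field K] (d ℓ : ℕ) (j : Fin d) (a : Fin d → ℕ)
    (ha : Nat.gcd ℓ (a j) = 1) (h : ℕ → MvPolynomial (Fin (d + 1)) K)
    (hs : ∑ k ∈ Finset.range ℓ, tauMap K d ℓ (h k) *
      (X (Fin.last d) * ∏ i : Fin d, X i.castSucc ^ a i) ^ k = 0)
    (hℓ : 0 < ℓ) (k : ℕ) (hk : k < ℓ) : h k = 0 := by
  set w : Fin (d + 1) → ZMod ℓ := Pi.single j.castSucc (1 : ZMod ℓ) with hw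
  set A : MvPolynomial (Fin (d + 1)) K := X (Fin.last d) * ∏ i : Fin d, X i.castSucc ^ a i with hA
  have hAh : IsWeightedHomogeneous w A (a j : ZMod ℓ) := by
    have h1 := isWeightedHomogeneous_X K w (Fin.last d)
    have h2 := IsWeightedHomogeneous.prod (R := K) (w := w) Finset.univ
      (fun i : Fin d => X i.castSucc ^ a i) (fun i => a i • w i.castSucc)
      (fun i _ => (isWeightedHomogeneous_X K w i.castSucc).pow (a i))
    have h3 := h1.mul h2
    convert h3 using 1
    simp [hw, Pi.single_apply, (Fin.castSucc_lt_last j).ne']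
  have hA0 : A ≠ 0 := by
    simp [hA, Finset.prod_eq_zero_iff]
  have hh : ∀ k, IsWeightedHomogeneous w (tauMap K d ℓ (h k) * A ^ k) (k • (a j : ZMod ℓ)) := by
    intro k
    simpa using (tauMap_hom K d ℓ j (h k)).mul (hAh.pow k)
  have hu : IsUnit (a j : ZMod ℓ) := (ZMod.isUnit_iff_coprime _ _).2 (Nat.Coprime.symm ha)
  have h0 := congrArg (weightedHomogeneousComponent w (k • (a j : ZMod ℓ))) hs
  rw [map_sum, map_zero, Finset.sum_eq_single k] at h0
  · rw [(hh k).weightedHomogeneousComponent_same] at h0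
    have := (mul_eq_zero.1 h0).resolve_right (pow_ne_zero _ hA0)
    exact tauMap_inj K d ℓ hℓ (by rw [this, map_zero])
  · intro k' hk' hne
    refine (hh k').weightedHomogeneousComponent_ne _ ?_
    intro he
    apply hne
    rw [nsmul_eq_mul, nsmul_eq_mul] at he
    have := hu.mul_right_cancel he
    rw [ZMod.natCast_eq_natCast_iff] at this
    first
    | exact Nat.ModEq.eq_of_lt_of_lt this (Finset.mem_range.1 hk') hk
    | exact Nat.ModEq.eq_of_lt_of_lt this.symm (Finset.mem_range.1 hk') hk
    | exact (Nat.ModEq.eq_of_lt_of_lt this hk (Finset.mem_range.1 hk')).symm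
  · intro hn
    exact absurd (Finset.mem_range.2 hk) hn

/-- For `ℓ ≥ δ = s_1 + ⋯ + s_n` coprime to some component of
`m = s_1 m_1 + ⋯ + s_n m_n`, the toric ideal of the projective extension
satisfies `I_{S̄_{ℓ,m}} = ῑ(I_{S̄}) + ⟨F⟩`, where
`F = x_{n+1}^ℓ − x_0^{ℓ−δ} x_1^{s_1}⋯x_n^{s_n}`.
Here the variables of `K[x_0,…,x_n]` are indexed by `Fin (n+1)` (with `x_0`
corresponding to `0`), the variables `t_1,…,t_d,u` are indexed by `Fin (d+1)`
with `u = X (Fin.last d)`, and `ῑ` is the inclusion `Fin.castSucc`. -/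
theorem stmt_5 (K : Type*) [Field K] (d n : ℕ)
    (m : Fin n → Fin d → ℕ) (s : Fin n → ℕ) (ℓ : ℕ) (hℓ : 0 < ℓ)
    (hδ : ∑ i, s i ≤ ℓ)
    (hgcd : ∃ j : Fin d, Nat.gcd ℓ (∑ i, s i * m i j) = 1)
    (φbar : MvPolynomial (Fin (n + 1)) K →ₐ[K] MvPolynomial (Fin (d + 1)) K)
    (hφbar : φbar = aeval fun i : Fin (n + 1) =>
      Fin.cases (X (Fin.last d))
        (fun i' : Fin n =>
          X (Fin.last d) * ∏ j : Fin d, X j.castSucc ^ m i' j) i)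
    (ψbar : MvPolynomial (Fin (n + 2)) K →ₐ[K] MvPolynomial (Fin (d + 1)) K)
    (hψbar : ψbar = aeval fun i : Fin (n + 2) =>
      Fin.cases (X (Fin.last d))
        (fun i' : Fin (n + 1) =>
          Fin.lastCases
            (X (Fin.last d) * ∏ j : Fin d, X j.castSucc ^ (∑ k, s k * m k j))
            (fun i'' : Fin n =>
              X (Fin.last d) * ∏ j : Fin d, X j.castSucc ^ (ℓ * m i'' j)) i') i)
    (F : MvPolynomial (Fin (n + 2)) K)
    (hF : F = X (Fin.last (n + 1)) ^ ℓ -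
      X (0 : Fin (n + 2)) ^ (ℓ - ∑ i, s i) *
        ∏ i : Fin n, X (i.succ.castSucc : Fin (n + 2)) ^ s i) :
    RingHom.ker ψbar =
      Ideal.map (rename (Fin.castSucc : Fin (n + 1) → Fin (n + 2))) (RingHom.ker φbar) ⊔
        Ideal.span {F} := by
  obtain ⟨j, hj⟩ := hgcd
  set ι := rename (R := K) (Fin.castSucc : Fin (n + 1) → Fin (n + 2)) with hι
  have hcomp : ∀ g, ψbar (ι g) = tauMap K d ℓ (φbar g) := by
    intro g
    have : ψbar.comp ι = (tauMap K d ℓ).comp φbar := by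
      apply MvPolynomial.algHom_ext
      intro i
      induction i using Fin.cases with
      | zero => simp [hι, hψbar, hφbar, tauMap]
      | succ i =>
        have e : (i.succ.castSucc : Fin (n + 2)) = i.castSucc.succ := rfl
        simp [hι, hψbar, hφbar, tauMap, e, pow_mul, -Fin.castSucc_succ, -Fin.succ_castSucc]
    exact DFunLike.congr_fun this g
  have hlast : ψbar (X (Fin.last (n + 1))) =
      X (Fin.last d) * ∏ i : Fin d, X i.castSucc ^ (∑ k, s k * m k i) := by
    have e : Fin.last (n + 1) = (Fin.last n).succ := rfl
    rw [hψbar, aeval_X, e, Fin.cases_succ, Fin.lastCases_last]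
  set M : MvPolynomial (Fin (n + 1)) K :=
    X 0 ^ (ℓ - ∑ i, s i) * ∏ i : Fin n, X i.succ ^ s i with hM
  have hFM : F = X (Fin.last (n + 1)) ^ ℓ - ι M := by
    simp [hF, hM, hι]
  have hF0 : ψbar F = 0 := by
    rw [hFM, map_sub, map_pow, hlast, hcomp, sub_eq_zero]
    have e : tauMap K d ℓ (φbar M) = X (Fin.last d) ^ (ℓ - ∑ i, s i) *
        ∏ i : Fin n, (X (Fin.last d) * ∏ j : Fin d, (X j.castSucc ^ ℓ) ^ m i j) ^ s i := by
      simp [hM, hφbar, tauMap]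
    rw [e]
    simp only [mul_pow, Finset.prod_mul_distrib, Finset.prod_pow_eq_pow_sum]
    rw [← mul_assoc, ← pow_add, Nat.sub_add_cancel hδ]
    congr 1
    simp only [← Finset.prod_pow]
    rw [Finset.prod_comm]
    refine Finset.prod_congr rfl fun i _ => ?_
    simp only [← pow_mul, Finset.prod_pow_eq_pow_sum]
    congr 1
    rw [Finset.sum_mul]
    exact Finset.sum_congr rfl fun k _ => by ring
  apply le_antisymm
  · intro f hf
    obtain ⟨g, hg⟩ := div_aux n ℓ hℓ M f
    rw [← hι, ← hFM] at hg
    have hgz : ψbar (f - ∑ k ∈ Finset.range ℓ, ι (g k) * X (Fin.last (n + 1)) ^ k) = 0 := by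
      obtain ⟨c, hc⟩ := Ideal.mem_span_singleton'.1 hg
      rw [← hc, map_mul, hF0, mul_zero]
    rw [map_sub, RingHom.mem_ker.1 hf, zero_sub, neg_eq_zero, map_sum] at hgz
    simp only [map_mul, map_pow, hlast, hcomp] at hgz
    have hk := indep_aux K d ℓ j (fun j => ∑ i, s i * m i j) hj (fun k => φbar (g k)) hgz hℓ
    have hsum : ∑ k ∈ Finset.range ℓ, ι (g k) * X (Fin.last (n + 1)) ^ k ∈
        Ideal.map ι (RingHom.ker φbar) :=
      Ideal.sum_mem _ fun k hkr => Ideal.mul_mem_right _ _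
        (Ideal.mem_map_of_mem _ (RingHom.mem_ker.2 (hk k (Finset.mem_range.1 hkr))))
    have := Ideal.add_mem _ (Ideal.mem_sup_right (S := Ideal.map ι (RingHom.ker φbar)) hg)
      (Ideal.mem_sup_left (T := Ideal.span {F}) hsum)
    rwa [sub_add_cancel] at this
  · refine sup_le (Ideal.map_le_iff_le_comap.2 fun g hg => ?_) ?_
    · rw [Ideal.mem_comap, RingHom.mem_ker, hcomp, RingHom.mem_ker.1 hg, map_zero]
    · rw [Ideal.span_singleton_le_iff_mem, RingHom.mem_ker, hF0]
end

section
/- Let m_1,…,m_n ∈ ℕ^d, let s_1,…,s_n ∈ ℕ, set m = s_1m_1 + ⋯ + s_nm_n, and let ℓ be a positive integer with ℓ ≤ s_1 + ⋯ + s_n such that gcd(ℓ, m_j) = 1 for some component m_j of m. Then the tangent cone ideal of the extension satisfies (I_{S_{ℓ,m}})* = ι(I_S*) + ⟨F*⟩, where F* = x_{n+1}^ℓ if ℓ < s_1 + ⋯ + s_n, and F* = F = x_{n+1}^ℓ − x_1^{s_1}⋯x_n^{s_n} if ℓ = s_1 + ⋯ + s_n. -/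
open MvPolynomial

/-- `f*`: the nonzero homogeneous component of `f` of smallest total degree. -/
noncomputable def lowestForm {K : Type*} [CommSemiring K] {σ : Type*}
    (f : MvPolynomial σ K) : MvPolynomial σ K :=
  homogeneousComponent (sInf {i : ℕ | homogeneousComponent i f ≠ 0}) f

/-- `I*`: the ideal of the tangent cone at the origin, generated by the
lowest-degree forms `f*` of the nonzero elements `f ∈ I`. -/
noncomputable def tangentConeIdeal {K : Type*} [CommSemiring K] {σ : Type*}
    (I : Ideal (MvPolynomial σ K)) : Ideal (MvPolynomial σ K) :=
  Ideal.span {g | ∃ f ∈ I, f ≠ 0 ∧ g = lowestForm f}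

section helpers

variable {K : Type*} [Field K] {σ : Type*}

lemma tc_mem_of_component {I : Ideal (MvPolynomial σ K)} {f : MvPolynomial σ K} (hf : f ∈ I)
    {e : ℕ} (h : ∀ i < e, homogeneousComponent i f = 0) :
    homogeneousComponent e f ∈ tangentConeIdeal I := by
  by_cases h0 : homogeneousComponent e f = 0
  · rw [h0]; exact Ideal.zero_mem _
  · apply Ideal.subset_span
    refine ⟨f, hf, ?_, ?_⟩
    · rintro rfl; simp at h0
    · unfold lowestForm
      congr 2
      apply le_antisymm
      · apply le_csInf ⟨e, h0⟩
        intro i hi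
        by_contra hlt
        exact hi (h i (by omega))
      · exact Nat.sInf_le h0

lemma tc_lowest {f : MvPolynomial σ K} {i : ℕ}
    (hi : i < sInf {i : ℕ | homogeneousComponent i f ≠ 0}) : homogeneousComponent i f = 0 := by
  by_contra h
  exact absurd (Nat.sInf_le (show i ∈ {i : ℕ | homogeneousComponent i f ≠ 0} from h)) (by omega)

lemma tc_degree_le {f : MvPolynomial σ K} {e : ℕ} (h : ∀ i < e, homogeneousComponent i f = 0)
    {u : σ →₀ ℕ} (hu : u ∈ f.support) : e ≤ u.degree := by
  by_contra hlt
  have h1 := congrArg (coeff u) (h u.degree (by omega))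
  rw [coeff_homogeneousComponent, if_pos rfl] at h1
  exact (mem_support_iff.1 hu) (by simpa using h1)

lemma tc_comp_monomial (i : ℕ) (u : σ →₀ ℕ) (c : K) :
    homogeneousComponent i (monomial u c) = if i = u.degree then monomial u c else 0 :=
  homogeneousComponent_of_mem (isHomogeneous_monomial c rfl)

/-- exponent of the reduced monomial -/
noncomputable def redExp {n : ℕ} (ℓ : ℕ) (s : Fin n → ℕ) (u : Fin (n + 1) →₀ ℕ) : Fin n →₀ ℕ :=
  Finsupp.equivFunOnFinite.symm fun i => u i.castSucc + u (Fin.last n) / ℓ * s i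

lemma redExp_apply {n : ℕ} (ℓ : ℕ) (s : Fin n → ℕ) (u : Fin (n + 1) →₀ ℕ) (i : Fin n) :
    redExp ℓ s u i = u i.castSucc + u (Fin.last n) / ℓ * s i := rfl

lemma redExp_degree {n : ℕ} (ℓ : ℕ) (s : Fin n → ℕ) (u : Fin (n + 1) →₀ ℕ) :
    (redExp ℓ s u).degree = ∑ i : Fin n, u i.castSucc + u (Fin.last n) / ℓ * ∑ i, s i := by
  rw [Finsupp.degree_eq_sum]
  simp only [redExp_apply, Finset.sum_add_distrib, Finset.mul_sum]

/-- the coefficient of `y^b` in the reduction modulo `F` -/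
noncomputable def redPart (K : Type*) [Field K] {n : ℕ} (ℓ : ℕ) (s : Fin n → ℕ) (b : ℕ) :
    MvPolynomial (Fin (n + 1)) K →ₗ[K] MvPolynomial (Fin n) K :=
  (basisMonomials (Fin (n + 1)) K).constr K fun u =>
    if u (Fin.last n) % ℓ = b then monomial (redExp ℓ s u) 1 else 0

lemma redPart_monomial {n : ℕ} (ℓ : ℕ) (s : Fin n → ℕ) (b : ℕ) (u : Fin (n + 1) →₀ ℕ) (c : K) :
    redPart K ℓ s b (monomial u c) =
      if u (Fin.last n) % ℓ = b then monomial (redExp ℓ s u) c else 0 := by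
  have h : (monomial u c : MvPolynomial (Fin (n + 1)) K)
      = c • basisMonomials (Fin (n + 1)) K u := by
    simp [coe_basisMonomials, smul_monomial]
  rw [h, map_smul, redPart, Module.Basis.constr_basis]
  split_ifs <;> simp [smul_monomial]

lemma redPart_component {n : ℕ} {ℓ : ℕ} {s : Fin n → ℕ} (hδ : ℓ ≤ ∑ i, s i)
    {f : MvPolynomial (Fin (n + 1)) K} {e : ℕ} (h : ∀ u ∈ f.support, e ≤ u.degree)
    (b i : ℕ) (hi : i < e - b) : homogeneousComponent i (redPart K ℓ s b f) = 0 := by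
  rw [f.as_sum, map_sum, map_sum]
  apply Finset.sum_eq_zero
  intro u hu
  rw [redPart_monomial]
  split_ifs with hb
  · rw [tc_comp_monomial, if_neg]
    rw [redExp_degree]
    have h1 := h u hu
    rw [Finsupp.degree_eq_sum, Fin.sum_univ_castSucc] at h1
    have h2 := Nat.div_add_mod (u (Fin.last n)) ℓ
    have h3 := Nat.mul_le_mul_left (u (Fin.last n) / ℓ) hδ
    rw [mul_comm ℓ] at h2
    omega
  · simp

/-- substituting decomposition of `ψ` -/
lemma psi_decomp {d n : ℕ} (M : Fin n → MvPolynomial (Fin d) K) (s : Fin n → ℕ)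
    (ℓ : ℕ) (hℓ : 0 < ℓ) (E : MvPolynomial (Fin d) K →ₐ[K] MvPolynomial (Fin d) K)
    (hE : ∀ i, E (M i) = M i ^ ℓ)
    (g : Fin (n + 1) → MvPolynomial (Fin d) K)
    (hg : ∀ i : Fin n, g i.castSucc = M i ^ ℓ)
    (hgl : g (Fin.last n) = ∏ i, M i ^ s i)
    (f : MvPolynomial (Fin (n + 1)) K) :
    aeval g f = ∑ b ∈ Finset.range ℓ,
      E (aeval M (redPart K ℓ s b f)) * (∏ i, M i ^ s i) ^ b := by
  induction f using MvPolynomial.induction_on' with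
  | add p q hp hq => simp only [map_add, hp, hq, add_mul, Finset.sum_add_distrib]
  | monomial u c =>
    rw [Finset.sum_eq_single (u (Fin.last n) % ℓ)]
    · rw [redPart_monomial, if_pos rfl, aeval_monomial, aeval_monomial,
        Finsupp.prod_fintype _ _ (by simp), Finsupp.prod_fintype _ _ (by simp),
        Fin.prod_univ_castSucc, map_mul, map_prod, AlgHom.commutes]
      simp only [hg, hgl, map_mul, map_pow, hE, redExp_apply, pow_add, Finset.prod_mul_distrib]
      conv_lhs => rw [← Nat.div_add_mod (u (Fin.last n)) ℓ]
      have : ∏ i, (M i ^ ℓ) ^ (u (Fin.last n) / ℓ * s i)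
          = (∏ i, M i ^ s i) ^ (ℓ * (u (Fin.last n) / ℓ)) := by
        rw [← Finset.prod_pow]
        refine Finset.prod_congr rfl fun i _ => ?_
        rw [← pow_mul, ← pow_mul]; congr 1; ring
      rw [this, pow_add]; ring
    · intro b _ hb
      rw [redPart_monomial, if_neg (Ne.symm hb)]; simp
    · intro hn
      exact absurd (Finset.mem_range.2 (Nat.mod_lt _ hℓ)) hn

lemma expand_sum_zero {d : ℕ} (ℓ : ℕ) (hℓ : 0 < ℓ) (μ : Fin d →₀ ℕ) (j : Fin d)
    (hj : Nat.gcd ℓ (μ j) = 1) (g : ℕ → MvPolynomial (Fin d) K)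
    (h : ∑ b ∈ Finset.range ℓ, expand ℓ (g b) * (monomial μ (1 : K)) ^ b = 0)
    (b : ℕ) (hb : b < ℓ) : g b = 0 := by
  ext v
  have h1 := congrArg (coeff (ℓ • v + b • μ)) h
  rw [coeff_sum, Finset.sum_eq_single b] at h1
  · rw [monomial_pow, one_pow, coeff_mul_monomial, mul_one, coeff_expand_smul ℓ hℓ.ne'] at h1
    simpa using h1
  · intro b' hb' hne
    rw [monomial_pow, one_pow, coeff_mul_monomial']
    split_ifs with hle
    · rw [mul_one]
      apply coeff_expand_of_not_dvd (i := j)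
      rintro ⟨k, hk⟩
      have hl := hle j
      simp only [Finsupp.coe_tsub, Finsupp.coe_add, Finsupp.coe_smul, Pi.sub_apply, Pi.add_apply,
        Pi.smul_apply, smul_eq_mul] at hk hl
      have hk' : ℓ * v j + b * μ j = ℓ * k + b' * μ j := by omega
      have hmod : b * μ j ≡ b' * μ j [MOD ℓ] := by
        have := congrArg (· % ℓ) hk'
        simpa [Nat.ModEq, Nat.mul_add_mod] using this
      have := Nat.ModEq.cancel_right_of_coprime hj hmod
      exact hne (Nat.ModEq.eq_of_lt_of_lt this hb (Finset.mem_range.1 hb')).symm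
    · rfl
  · intro hn; exact absurd (Finset.mem_range.2 hb) hn

lemma monomial_split {n : ℕ} (u : Fin (n + 1) →₀ ℕ) (c : K) :
    monomial u c = C c * (∏ i : Fin n, X i.castSucc ^ u i.castSucc) * X (Fin.last n) ^ u (Fin.last n) := by
  rw [monomial_eq, Finsupp.prod_fintype _ _ (by simp), Fin.prod_univ_castSucc, mul_assoc]

lemma diff_mem {n : ℕ} {ℓ : ℕ} (hℓ : 0 < ℓ) {s : Fin n → ℕ} (hδ : ℓ ≤ ∑ i, s i)
    {Fstar : MvPolynomial (Fin (n + 1)) K}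
    (hFstar : Fstar = if ℓ < ∑ i, s i then X (Fin.last n) ^ ℓ else
      X (Fin.last n) ^ ℓ - ∏ i : Fin n, X i.castSucc ^ s i)
    {e : ℕ} (u : Fin (n + 1) →₀ ℕ) (hu : e ≤ u.degree) (c : K) :
    homogeneousComponent e (monomial u c) - ∑ b ∈ Finset.range ℓ, (if b ≤ e then
      rename Fin.castSucc (homogeneousComponent (e - b) (redPart K ℓ s b (monomial u c)))
        * X (Fin.last n) ^ b else 0) ∈ Ideal.span {Fstar} := by
  have hs := Finset.sum_eq_single (s := Finset.range ℓ) (f := fun b => (if b ≤ e then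
      rename Fin.castSucc (homogeneousComponent (e - b) (redPart K ℓ s b (monomial u c)))
        * X (Fin.last n) ^ b else (0 : MvPolynomial (Fin (n + 1)) K))) (u (Fin.last n) % ℓ)
      (by
        intro b _ hb
        simp only [redPart_monomial, if_neg (Ne.symm hb)]; simp)
      (fun hn => absurd (Finset.mem_range.2 (Nat.mod_lt _ hℓ)) hn)
  rw [hs, redPart_monomial, if_pos rfl, tc_comp_monomial, tc_comp_monomial, redExp_degree]
  have h1 := Finsupp.degree_eq_sum u
  rw [Fin.sum_univ_castSucc] at h1
  have h2 := Nat.div_add_mod (u (Fin.last n)) ℓ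
  rw [mul_comm ℓ] at h2
  have h3 := Nat.mul_le_mul_left (u (Fin.last n) / ℓ) hδ
  set q := u (Fin.last n) / ℓ with hq
  set b := u (Fin.last n) % ℓ with hb
  by_cases he : e = u.degree
  · rw [if_pos he, if_pos (by omega)]
    by_cases hlt : ℓ < ∑ i, s i
    · rw [if_pos hlt] at hFstar
      by_cases hq0 : q = 0
      · rw [if_pos (by rw [hq0] at h2 ⊢; omega)]
        have : monomial u c - rename Fin.castSucc (monomial (redExp ℓ s u) c)
            * X (Fin.last n) ^ b = 0 := by
          rw [sub_eq_zero, monomial_split, monomial_eq, Finsupp.prod_fintype _ _ (by simp)]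
          simp only [map_mul, rename_C, map_prod, map_pow, rename_X, redExp_apply]
          rw [← hq, hq0]
          rw [hq0] at h2
          simp only [zero_mul, add_zero, zero_add] at h2 ⊢
          rw [h2]
        rw [this]; exact Ideal.zero_mem _
      · have h4 := Nat.mul_lt_mul_of_pos_left hlt (Nat.pos_of_ne_zero hq0)
        rw [if_neg (by omega)]
        simp only [map_zero, zero_mul, sub_zero]
        rw [Ideal.mem_span_singleton, hFstar, monomial_split]
        apply Dvd.dvd.mul_left
        apply pow_dvd_pow
        have := Nat.le_mul_of_pos_left ℓ (Nat.pos_of_ne_zero hq0)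
        omega
    · rw [if_neg hlt] at hFstar
      have heq : ∑ i, s i = ℓ := by omega
      rw [heq, if_pos (by omega), Ideal.mem_span_singleton, hFstar, monomial_split, monomial_eq,
        Finsupp.prod_fintype _ _ (by simp)]
      simp only [map_mul, rename_C, map_prod, map_pow, rename_X, redExp_apply, pow_add,
        Finset.prod_mul_distrib]
      rw [← hq]
      have : ∏ i : Fin n, (X i.castSucc : MvPolynomial (Fin (n + 1)) K) ^ (q * s i)
          = (∏ i : Fin n, X i.castSucc ^ s i) ^ q := by
        rw [← Finset.prod_pow]
        refine Finset.prod_congr rfl fun i _ => ?_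
        rw [← pow_mul]; congr 1; ring
      rw [this, ← h2, pow_add, mul_comm q, pow_mul]
      have hd := sub_dvd_pow_sub_pow (X (Fin.last n) ^ ℓ : MvPolynomial (Fin (n + 1)) K)
        (∏ i : Fin n, X i.castSucc ^ s i) q
      refine (hd.mul_left (C c * (∏ i : Fin n, X i.castSucc ^ u i.castSucc)
        * X (Fin.last n) ^ b)).trans (dvd_of_eq ?_)
      ring
  · rw [if_neg he]
    split_ifs with h5 h6
    · omega
    · simp
    · simp

end helpers

/-- For `ℓ ≤ s_1 + ⋯ + s_n` positive and coprime to some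
component of `m = s_1 m_1 + ⋯ + s_n m_n`, the tangent cone ideal of the
extension satisfies `(I_{S_{ℓ,m}})* = ι(I_S*) + ⟨F*⟩`, where
`F* = x_{n+1}^ℓ` if `ℓ < s_1 + ⋯ + s_n` and `F* = F = x_{n+1}^ℓ − x_1^{s_1}⋯x_n^{s_n}`
if `ℓ = s_1 + ⋯ + s_n`. -/
theorem stmt_7 (K : Type*) [Field K] (d n : ℕ)
    (m : Fin n → Fin d → ℕ) (s : Fin n → ℕ) (ℓ : ℕ) (hℓ : 0 < ℓ)
    (hδ : ℓ ≤ ∑ i, s i)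
    (hgcd : ∃ j : Fin d, Nat.gcd ℓ (∑ i, s i * m i j) = 1)
    (φ : MvPolynomial (Fin n) K →ₐ[K] MvPolynomial (Fin d) K)
    (hφ : φ = aeval fun i : Fin n => ∏ j : Fin d, X j ^ m i j)
    (ψ : MvPolynomial (Fin (n + 1)) K →ₐ[K] MvPolynomial (Fin d) K)
    (hψ : ψ = aeval fun i : Fin (n + 1) =>
      Fin.lastCases (∏ j : Fin d, X j ^ (∑ i', s i' * m i' j))
        (fun i' : Fin n => ∏ j : Fin d, X j ^ (ℓ * m i' j)) i)
    (F Fstar : MvPolynomial (Fin (n + 1)) K)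
    (hF : F = X (Fin.last n) ^ ℓ - ∏ i : Fin n, X i.castSucc ^ s i)
    (hFstar : Fstar = if ℓ < ∑ i, s i then X (Fin.last n) ^ ℓ else F) :
    tangentConeIdeal (RingHom.ker ψ) =
      Ideal.map (rename (Fin.castSucc : Fin n → Fin (n + 1)))
          (tangentConeIdeal (RingHom.ker φ)) ⊔
        Ideal.span {Fstar} := by
  have hgen : ∀ f, ψ f = ∑ b ∈ Finset.range ℓ,
      expand ℓ (φ (redPart K ℓ s b f)) *
        (∏ i, (∏ j : Fin d, (X j : MvPolynomial (Fin d) K) ^ m i j) ^ s i) ^ b := by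
    intro f
    rw [hψ, hφ]
    apply psi_decomp (fun i : Fin n => ∏ j : Fin d, (X j : MvPolynomial (Fin d) K) ^ m i j) s ℓ hℓ
    · intro i
      simp only [map_prod, map_pow, expand_X, ← Finset.prod_pow]
      refine Finset.prod_congr rfl fun j _ => ?_
      rw [← pow_mul, ← pow_mul, mul_comm]
    · intro i
      simp only [Fin.lastCases_castSucc, ← Finset.prod_pow]
      refine Finset.prod_congr rfl fun j _ => ?_
      rw [← pow_mul, mul_comm]
    · simp only [Fin.lastCases_last, ← Finset.prod_pow]
      rw [Finset.prod_comm]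
      refine Finset.prod_congr rfl fun j _ => ?_
      rw [← Finset.prod_pow_eq_pow_sum]
      refine Finset.prod_congr rfl fun i _ => ?_
      rw [← pow_mul, mul_comm]
  have hT : (∏ i, (∏ j : Fin d, (X j : MvPolynomial (Fin d) K) ^ m i j) ^ s i)
      = monomial (Finsupp.equivFunOnFinite.symm fun j => ∑ i, s i * m i j) (1 : K) := by
    rw [monomial_eq, Finsupp.prod_fintype _ _ (by simp)]
    simp only [← Finset.prod_pow, map_one, one_mul]
    rw [Finset.prod_comm]
    refine Finset.prod_congr rfl fun j _ => ?_
    rw [Finsupp.equivFunOnFinite_symm_apply_apply, ← Finset.prod_pow_eq_pow_sum]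
    refine Finset.prod_congr rfl fun i _ => ?_
    rw [← pow_mul, mul_comm]
  obtain ⟨j, hj⟩ := hgcd
  have hred : ∀ f, ψ f = 0 → ∀ b < ℓ, φ (redPart K ℓ s b f) = 0 := by
    intro f hf b hb
    have h := hgen f
    rw [hf, hT] at h
    exact expand_sum_zero ℓ hℓ _ j (by simpa using hj) (fun b => φ (redPart K ℓ s b f)) h.symm b hb
  have hψφ : ∀ p, ψ (rename Fin.castSucc p) = expand ℓ (φ p) := by
    intro p
    rw [hψ, hφ, aeval_rename]
    have : (aeval fun i : Fin n => ∏ j : Fin d, (X j : MvPolynomial (Fin d) K) ^ (ℓ * m i j))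
        = (expand ℓ).comp (aeval (R := K) fun i : Fin n =>
          ∏ j : Fin d, (X j : MvPolynomial (Fin d) K) ^ m i j) := by
      ext i : 1
      simp only [aeval_X, AlgHom.comp_apply, map_prod, map_pow, expand_X, pow_mul]
    rw [← AlgHom.comp_apply, ← this]
    congr 2
    funext i
    simp
  have hFker : ψ F = 0 := by
    rw [hF, map_sub, sub_eq_zero, hψ]
    simp only [map_prod, map_pow, aeval_X, Fin.lastCases_last, Fin.lastCases_castSucc,
      ← Finset.prod_pow]
    rw [Finset.prod_comm]
    refine Finset.prod_congr rfl fun j _ => ?_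
    rw [← pow_mul, Finset.sum_mul, ← Finset.prod_pow_eq_pow_sum]
    refine Finset.prod_congr rfl fun i _ => ?_
    rw [← pow_mul]; congr 1; ring
  have hX : ((X (Fin.last n) : MvPolynomial (Fin (n + 1)) K) ^ ℓ).IsHomogeneous ℓ :=
    isHomogeneous_X_pow _ _
  have hP : (∏ i : Fin n, (X i.castSucc : MvPolynomial (Fin (n + 1)) K) ^ s i).IsHomogeneous
      (∑ i, s i) := IsHomogeneous.prod _ _ _ fun i _ => isHomogeneous_X_pow _ _
  have hFc : ∀ i, homogeneousComponent i F = (if i = ℓ then X (Fin.last n) ^ ℓ else 0) -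
      (if i = ∑ i, s i then ∏ i : Fin n, X i.castSucc ^ s i else 0) := by
    intro i
    rw [hF, map_sub, homogeneousComponent_of_mem hX, homogeneousComponent_of_mem hP]
  apply le_antisymm
  · apply Ideal.span_le.2
    rintro _ ⟨f, hf, hf0, rfl⟩
    rw [SetLike.mem_coe]
    have hf' : ψ f = 0 := hf
    have hlow := fun i => tc_lowest (f := f) (i := i)
    unfold lowestForm
    generalize sInf {i : ℕ | homogeneousComponent i f ≠ 0} = e at hlow
    have hdeg : ∀ u ∈ f.support, e ≤ u.degree := fun u hu => tc_degree_le hlow hu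
    let L : MvPolynomial (Fin (n + 1)) K →ₗ[K] MvPolynomial (Fin (n + 1)) K :=
      ∑ b ∈ Finset.range ℓ, if b ≤ e then
        LinearMap.mulRight K (X (Fin.last n) ^ b) ∘ₗ
          (rename (R := K) (Fin.castSucc : Fin n → Fin (n + 1))).toLinearMap ∘ₗ
          homogeneousComponent (e - b) ∘ₗ redPart K ℓ s b else 0
    have hL : ∀ f, L f = ∑ b ∈ Finset.range ℓ, (if b ≤ e then
      rename Fin.castSucc (homogeneousComponent (e - b) (redPart K ℓ s b f))
        * X (Fin.last n) ^ b else 0) := by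
      intro f
      simp only [L, LinearMap.sum_apply]
      refine Finset.sum_congr rfl fun b _ => ?_
      split_ifs <;> simp
    have h1 : homogeneousComponent e f - L f ∈ Ideal.span {Fstar} := by
      rw [← LinearMap.sub_apply, f.as_sum, map_sum]
      refine Ideal.sum_mem _ fun u hu => ?_
      rw [LinearMap.sub_apply, hL]
      exact diff_mem hℓ hδ (by rw [hFstar, hF]) u (hdeg u hu) _
    have h2 : L f ∈ Ideal.map (rename (Fin.castSucc : Fin n → Fin (n + 1)))
          (tangentConeIdeal (RingHom.ker φ)) := by
      rw [hL]
      refine Ideal.sum_mem _ fun b hb => ?_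
      split_ifs with hbe
      · apply Ideal.mul_mem_right
        apply Ideal.mem_map_of_mem
        apply tc_mem_of_component
        · exact hred f hf' b (Finset.mem_range.1 hb)
        · intro i hi
          exact redPart_component hδ hdeg b i hi
      · exact Ideal.zero_mem _
    have := Submodule.add_mem_sup h2 h1
    rwa [add_sub_cancel] at this
  · apply sup_le
    · rw [tangentConeIdeal, Ideal.map_span]
      apply Ideal.span_le.2
      rintro _ ⟨_, ⟨f, hf, hf0, rfl⟩, rfl⟩
      rw [SetLike.mem_coe]
      have hf' : φ f = 0 := hf
      unfold lowestForm
      rw [rename_homogeneousComponent]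
      apply tc_mem_of_component
      · rw [RingHom.mem_ker, hψφ, hf', map_zero]
      · intro i hi
        rw [← rename_homogeneousComponent, tc_lowest hi, map_zero]
    · rw [Ideal.span_singleton_le_iff_mem]
      have : Fstar = homogeneousComponent ℓ F := by
        rw [hFc, if_pos rfl, hFstar]
        split_ifs with h1 h2 h2
        · omega
        · simp
        · exact hF
        · omega
      rw [this]
      apply tc_mem_of_component
      · exact hFker
      · intro i hi
        rw [hFc, if_neg (by omega), if_neg (by omega), sub_zero]
end

section
/- Let K be a field and let φ : K[x_1,…,x_5] → K[t_1,t_2] be the K-algebra homomorphism with φ(x_1) = t_1^6, φ(x_2) = t_2^2, φ(x_3) = t_1^7, φ(x_4) = t_1^6t_2^4, φ(x_5) = t_1^{15}. Then the kernel of φ (the toric ideal of the semigroup S generated by (6,0), (0,2), (7,0), (6,4), (15,0)) equals the ideal ⟨x_1x_2^2 − x_4, x_3^3 − x_1x_5, x_1^5 − x_5^2⟩; in particular this toric ideal of the codimension-3 toric surface V_S ⊂ A^5 is a complete intersection generated by 3 elements. -/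
open MvPolynomial

/-- Normal form of the exponent pair `(p, q)`. -/
noncomputable def nfMon (K : Type*) [Field K] (s : Fin 2 →₀ ℕ) : MvPolynomial (Fin 5) K :=
  X 0 ^ ((s 0 - 7 * (s 0 % 6 % 3) - 15 * (s 0 % 6 / 3)) / 6) * X 1 ^ (s 1 / 2) *
    X 2 ^ (s 0 % 6 % 3) * X 4 ^ (s 0 % 6 / 3)

theorem red_aux {A : Type*} [CommRing A] (x y z w u : A) (h1 : w = x * y ^ 2)
    (h2 : z ^ 3 = x * u) (h3 : u ^ 2 = x ^ 5) (c e a d b p q : ℕ)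
    (hp : p = 6 * c + 7 * a + 6 * d + 15 * b) (hq : q = 2 * e + 4 * d) :
    x ^ c * y ^ e * z ^ a * w ^ d * u ^ b =
      x ^ ((p - 7 * (p % 6 % 3) - 15 * (p % 6 / 3)) / 6) * y ^ (q / 2) *
        z ^ (p % 6 % 3) * u ^ (p % 6 / 3) := by
  obtain ⟨a1, a0, ha0, rfl⟩ : ∃ a1 a0, a0 < 3 ∧ a = 3 * a1 + a0 :=
    ⟨a / 3, a % 3, by omega, by omega⟩
  obtain ⟨k, b0, hb0, hk⟩ : ∃ k b0, b0 < 2 ∧ a1 + b = 2 * k + b0 :=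
    ⟨(a1 + b) / 2, (a1 + b) % 2, by omega, by omega⟩
  have hm : p = 6 * (c + d + a1 + 5 * k) + 7 * a0 + 15 * b0 := by omega
  have e0 : p % 6 = a0 + 3 * b0 := by omega
  have e1 : p % 6 % 3 = a0 := by omega
  have e2 : p % 6 / 3 = b0 := by omega
  have e3 : (p - 7 * a0 - 15 * b0) / 6 = c + d + a1 + 5 * k := by omega
  have e4 : q / 2 = e + 2 * d := by omega
  rw [e1, e2, e3, e4, h1, pow_add z, pow_mul z, h2]
  have hu : u ^ a1 * u ^ b = x ^ (5 * k) * u ^ b0 := by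
    rw [← pow_add, hk, pow_add, pow_mul, h3, pow_mul]
  calc _ = x ^ c * y ^ e * x ^ a1 * z ^ a0 * (x * y ^ 2) ^ d * (u ^ a1 * u ^ b) := by ring
    _ = _ := by rw [hu]; ring

theorem stmt_12 (K : Type*) [Field K]
    (φ : MvPolynomial (Fin 5) K →ₐ[K] MvPolynomial (Fin 2) K)
    (hφ : φ = aeval ![X 0 ^ 6, X 1 ^ 2, X 0 ^ 7, X 0 ^ 6 * X 1 ^ 4, X 0 ^ 15]) :
    RingHom.ker φ =
      Ideal.span {X 0 * X 1 ^ 2 - X 3, X 2 ^ 3 - X 0 * X 4, X 0 ^ 5 - X 4 ^ 2} := by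
  apply le_antisymm
  · set I : Ideal (MvPolynomial (Fin 5) K) :=
      Ideal.span {X 0 * X 1 ^ 2 - X 3, X 2 ^ 3 - X 0 * X 4, X 0 ^ 5 - X 4 ^ 2} with hI
    have g1 : Ideal.Quotient.mk I (X 3) = Ideal.Quotient.mk I (X 0) * Ideal.Quotient.mk I (X 1) ^ 2 := by
      rw [← map_pow, ← map_mul, eq_comm, Ideal.Quotient.eq]
      exact Ideal.subset_span (by simp)
    have g2 : Ideal.Quotient.mk I (X 2) ^ 3 = Ideal.Quotient.mk I (X 0) * Ideal.Quotient.mk I (X 4) := by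
      rw [← map_pow, ← map_mul, Ideal.Quotient.eq]
      exact Ideal.subset_span (by simp)
    have g3 : Ideal.Quotient.mk I (X 4) ^ 2 = Ideal.Quotient.mk I (X 0) ^ 5 := by
      rw [← map_pow, ← map_pow, eq_comm, Ideal.Quotient.eq]
      exact Ideal.subset_span (by simp)
    let ψ : MvPolynomial (Fin 2) K →ₗ[K] MvPolynomial (Fin 5) K :=
      (basisMonomials (Fin 2) K).constr K (nfMon K)
    have hψ : ∀ s, ψ (monomial s 1) = nfMon K s := fun s => by
      have := (basisMonomials (Fin 2) K).constr_basis K (nfMon K) s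
      rwa [coe_basisMonomials] at this
    have key : (Ideal.Quotient.mkₐ K I).toLinearMap =
        (Ideal.Quotient.mkₐ K I).toLinearMap ∘ₗ ψ ∘ₗ φ.toLinearMap := by
      apply (basisMonomials (Fin 5) K).ext
      intro m
      have h1 : φ (monomial m 1) = monomial (Finsupp.single 0 (6 * m 0 + 7 * m 2 + 6 * m 3 + 15 * m 4)
          + Finsupp.single 1 (2 * m 1 + 4 * m 3)) 1 := by
        rw [hφ, aeval_monomial, Finsupp.prod_fintype _ _ (by simp), Fin.prod_univ_five,
          ← mul_one (1 : K), ← monomial_mul, ← X_pow_eq_monomial, ← X_pow_eq_monomial]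
        simp
        ring
      have h2 : (monomial m 1 : MvPolynomial (Fin 5) K) =
          X 0 ^ m 0 * X 1 ^ m 1 * X 2 ^ m 2 * X 3 ^ m 3 * X 4 ^ m 4 := by
        rw [monomial_eq, Finsupp.prod_fintype _ _ (by simp), Fin.prod_univ_five]
        simp
      rw [coe_basisMonomials]
      simp only [LinearMap.comp_apply, AlgHom.toLinearMap_apply]
      rw [h1, hψ, h2, nfMon]
      simp only [Ideal.Quotient.mkₐ_eq_mk, map_mul, map_pow]
      exact red_aux _ _ _ _ _ g1 g2 g3 _ _ _ _ _ _ _ (by simp) (by simp)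
    intro f hf
    have hf' : φ f = 0 := hf
    have := LinearMap.congr_fun key f
    simp only [LinearMap.comp_apply, AlgHom.toLinearMap_apply, hf', map_zero] at this
    exact Ideal.Quotient.eq_zero_iff_mem.mp this
  · rw [Ideal.span_le]
    rintro f (rfl | rfl | rfl) <;> simp [hφ] <;> ring
end

section
/- Let K be a field and let I_S ⊂ K[x_1,…,x_5] be the kernel of the K-algebra homomorphism φ with φ(x_1) = t_1^6, φ(x_2) = t_2^2, φ(x_3) = t_1^7, φ(x_4) = t_1^6t_2^4, φ(x_5) = t_1^{15} (equivalently I_S = ⟨x_1x_2^2 − x_4, x_3^3 − x_1x_5, x_1^5 − x_5^2⟩). Then the ideal of the tangent cone at the origin equals I_S* = ⟨x_5^2, x_4, x_3^3x_5, x_3^6, x_1x_5⟩. -/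
open MvPolynomial

lemma lowestForm_sub {K : Type*} [Field K] {σ : Type*} {g h : MvPolynomial σ K} {p q : ℕ}
    (hg : g.IsHomogeneous p) (hh : h.IsHomogeneous q) (hpq : p < q) (h0 : g ≠ 0) :
    lowestForm (g - h) = g := by
  have key : ∀ i, homogeneousComponent i (g - h) =
      (if i = p then g else 0) - (if i = q then h else 0) := by
    intro i
    rw [map_sub, homogeneousComponent_of_mem ((mem_homogeneousSubmodule _ _).2 hg),
      homogeneousComponent_of_mem ((mem_homogeneousSubmodule _ _).2 hh)]
  have hs : sInf {i : ℕ | homogeneousComponent i (g - h) ≠ 0} = p := by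
    apply le_antisymm
    · apply Nat.sInf_le
      simp only [Set.mem_ofPred_eq, key, if_true, if_neg hpq.ne, sub_zero]
      exact h0
    · apply le_csInf
      · refine ⟨p, ?_⟩
        simp only [Set.mem_ofPred_eq, key, if_true, if_neg hpq.ne, sub_zero]
        exact h0
      · intro i hi
        by_contra hlt
        apply hi
        rw [key, if_neg (by omega), if_neg (by omega), sub_zero]
  unfold lowestForm
  rw [hs, key, if_pos rfl, if_neg hpq.ne, sub_zero]

lemma mem_tangent {K : Type*} [Field K] {σ : Type*} {I : Ideal (MvPolynomial σ K)}
    {g h : MvPolynomial σ K} (p q : ℕ)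
    (hg : g.IsHomogeneous p) (hh : h.IsHomogeneous q) (hpq : p < q) (h0 : g ≠ 0)
    (hI : g - h ∈ I) : g ∈ tangentConeIdeal I := by
  apply Ideal.subset_span
  refine ⟨g - h, hI, ?_, (lowestForm_sub hg hh hpq h0).symm⟩
  intro hz
  have := lowestForm_sub hg hh hpq h0
  rw [hz] at this
  apply h0
  rw [← this]
  simp [lowestForm]

lemma phi_coeff {K : Type*} [Field K] (f : MvPolynomial (Fin 5) K) (m : Fin 5 →₀ ℕ) :
    coeff (Finsupp.single 0 (6 * m 0 + 7 * m 2 + 6 * m 3 + 15 * m 4)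
        + Finsupp.single 1 (2 * m 1 + 4 * m 3))
      (aeval ![X 0 ^ 6, X 1 ^ 2, X 0 ^ 7, X 0 ^ 6 * X 1 ^ 4, X 0 ^ 15] f :
        MvPolynomial (Fin 2) K) =
    ∑ k ∈ f.support, if 6 * k 0 + 7 * k 2 + 6 * k 3 + 15 * k 4 =
        6 * m 0 + 7 * m 2 + 6 * m 3 + 15 * m 4 ∧ 2 * k 1 + 4 * k 3 = 2 * m 1 + 4 * m 3
      then coeff k f else 0 := by
  rw [aeval_def, eval₂_eq', coeff_sum]
  apply Finset.sum_congr rfl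
  intro k _
  have : (∏ i, (![X 0 ^ 6, X 1 ^ 2, X 0 ^ 7, X 0 ^ 6 * X 1 ^ 4, X 0 ^ 15] :
      Fin 5 → MvPolynomial (Fin 2) K) i ^ k i) =
      monomial (Finsupp.single 0 (6 * k 0 + 7 * k 2 + 6 * k 3 + 15 * k 4)
        + Finsupp.single 1 (2 * k 1 + 4 * k 3)) 1 := by
    rw [show (1 : K) = 1 * 1 by simp, ← monomial_mul, ← X_pow_eq_monomial, ← X_pow_eq_monomial]
    simp [Fin.prod_univ_five]
    ring
  rw [this, algebraMap_eq, coeff_C_mul, coeff_monomial, mul_ite, mul_one, mul_zero]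
  congr 1
  rw [eq_iff_iff, Finsupp.ext_iff]
  simp [Fin.forall_fin_two]

lemma monomial_mem {K : Type*} [Field K] {σ : Type*} {J : Ideal (MvPolynomial σ K)}
    {g m : σ →₀ ℕ} (c : K) (hg : monomial g 1 ∈ J) (h : g ≤ m) : monomial m c ∈ J := by
  have : monomial m c = monomial (m - g) c * monomial g 1 := by
    rw [monomial_mul, tsub_add_cancel_of_le h, mul_one]
  rw [this]
  exact J.mul_mem_left _ hg

/-- Let `I_S ⊂ K[x_1,…,x_5]` be the kernel of `φ` with
`φ(x_1)=t_1^6`, `φ(x_2)=t_2^2`, `φ(x_3)=t_1^7`, `φ(x_4)=t_1^6 t_2^4`,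
`φ(x_5)=t_1^{15}`. Then the ideal of the tangent cone at the origin is
`I_S* = ⟨x_5^2, x_4, x_3^3x_5, x_3^6, x_1x_5⟩`. -/
theorem stmt_13 (K : Type*) [Field K]
    (φ : MvPolynomial (Fin 5) K →ₐ[K] MvPolynomial (Fin 2) K)
    (hφ : φ = aeval ![X 0 ^ 6, X 1 ^ 2, X 0 ^ 7, X 0 ^ 6 * X 1 ^ 4, X 0 ^ 15]) :
    tangentConeIdeal (RingHom.ker φ) =
      Ideal.span {X 4 ^ 2, X 3, X 2 ^ 3 * X 4, X 2 ^ 6, X 0 * X 4} := by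
  have hX : ∀ (i : Fin 5) (n : ℕ), ((X i : MvPolynomial (Fin 5) K) ^ n).IsHomogeneous n :=
    fun i n => isHomogeneous_X_pow i n
  have hX1 : ∀ (i : Fin 5), ((X i : MvPolynomial (Fin 5) K)).IsHomogeneous 1 :=
    fun i => isHomogeneous_X K i
  have hne : ∀ i : Fin 5, (X i : MvPolynomial (Fin 5) K) ≠ 0 := fun i => X_ne_zero i
  apply le_antisymm
  · unfold tangentConeIdeal
    rw [Ideal.span_le]
    rintro _ ⟨f, hf, -, rfl⟩
    set J : Ideal (MvPolynomial (Fin 5) K) :=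
      Ideal.span {X 4 ^ 2, X 3, X 2 ^ 3 * X 4, X 2 ^ 6, X 0 * X 4} with hJ
    rw [SetLike.mem_coe, (lowestForm f).as_sum]
    apply J.sum_mem
    intro m hm
    generalize coeff m (lowestForm f) = c
    rw [mem_support_iff, lowestForm, coeff_homogeneousComponent] at hm
    have hdeg : m.degree = sInf {i : ℕ | homogeneousComponent i f ≠ 0} := by
      by_contra h
      rw [if_neg h] at hm
      exact hm rfl
    rw [if_pos hdeg] at hm
    have hmin : ∀ k ∈ f.support, m.degree ≤ k.degree := by
      intro k hk
      rw [hdeg]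
      apply Nat.sInf_le
      intro h0
      have := congrArg (coeff k) h0
      rw [coeff_homogeneousComponent, if_pos rfl, coeff_zero] at this
      exact (mem_support_iff.1 hk) this
    have hcases : 2 ≤ m 4 ∨ 1 ≤ m 3 ∨ (3 ≤ m 2 ∧ 1 ≤ m 4) ∨ 6 ≤ m 2 ∨ (1 ≤ m 0 ∧ 1 ≤ m 4) := by
      by_contra hstd
      have h1 := phi_coeff f m
      rw [← hφ, (RingHom.mem_ker).1 hf, coeff_zero, Finset.sum_eq_single m] at h1
      · simp at h1
        exact hm h1.symm
      · intro k hk hkm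
        rw [if_neg]
        rintro ⟨e1, e2⟩
        apply hkm
        have h2 := hmin k hk
        simp only [Finsupp.degree_eq_sum, Fin.sum_univ_five] at h2
        have : k 0 = m 0 ∧ k 1 = m 1 ∧ k 2 = m 2 ∧ k 3 = m 3 ∧ k 4 = m 4 := by omega
        obtain ⟨a0, a1, a2, a3, a4⟩ := this
        ext i
        fin_cases i <;> assumption
      · intro h
        exact absurd (mem_support_iff.2 hm) h
    have hle : ∀ (i : Fin 5) (n : ℕ), n ≤ m i → Finsupp.single i n ≤ m := by
      intro i n h
      simpa using h
    have hle2 : ∀ (i j : Fin 5) (n p : ℕ), i ≠ j → n ≤ m i → p ≤ m j →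
        Finsupp.single i n + Finsupp.single j p ≤ m := by
      intro i j n p hij h h' l
      by_cases hl : l = i
      · subst hl
        simpa [Finsupp.single_apply, hij.symm] using h
      · by_cases hl' : l = j
        · subst hl'
          simpa [Finsupp.single_apply, hij] using h'
        · simp [Finsupp.single_apply, Ne.symm hl, Ne.symm hl']
    have hmon : ∀ (i j : Fin 5) (n p : ℕ),
        (monomial (Finsupp.single i n + Finsupp.single j p) 1 : MvPolynomial (Fin 5) K)
          = X i ^ n * X j ^ p := by
      intro i j n p
      rw [X_pow_eq_monomial, X_pow_eq_monomial, monomial_mul, one_mul]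
    rcases hcases with h | h | ⟨h, h'⟩ | h | ⟨h, h'⟩
    · refine monomial_mem c ?_ (hle _ _ h)
      rw [← X_pow_eq_monomial]
      exact Ideal.subset_span (by simp)
    · refine monomial_mem c ?_ (hle _ _ h)
      rw [← X_pow_eq_monomial, pow_one]
      exact Ideal.subset_span (by simp)
    · refine monomial_mem c ?_ (hle2 _ _ _ _ (by decide) h h')
      rw [hmon, pow_one]
      exact Ideal.subset_span (by simp)
    · refine monomial_mem c ?_ (hle _ _ h)
      rw [← X_pow_eq_monomial]
      exact Ideal.subset_span (by simp)
    · refine monomial_mem c ?_ (hle2 _ _ _ _ (by decide) h h')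
      rw [hmon, pow_one, pow_one]
      exact Ideal.subset_span (by simp)
  · rw [Ideal.span_le]
    intro g hg
    simp only [Set.mem_insert_iff, Set.mem_singleton_iff] at hg
    rcases hg with rfl | rfl | rfl | rfl | rfl
    · refine mem_tangent 2 5 (hX 4 2) (hX 0 5) (by norm_num) (pow_ne_zero _ (hne _)) ?_
      rw [RingHom.mem_ker, hφ]
      simp
      ring
    · refine mem_tangent 1 3 (hX1 3) ((hX1 0).mul (hX 1 2)) (by norm_num) (hne _) ?_
      rw [RingHom.mem_ker, hφ]
      simp
      ring
    · refine mem_tangent 4 6 ((hX 2 3).mul (hX1 4)) (hX 0 6) (by norm_num)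
        (mul_ne_zero (pow_ne_zero _ (hne _)) (hne _)) ?_
      rw [RingHom.mem_ker, hφ]
      simp
      ring
    · refine mem_tangent 6 7 (hX 2 6) (hX 0 7) (by norm_num) (pow_ne_zero _ (hne _)) ?_
      rw [RingHom.mem_ker, hφ]
      simp
      ring
    · refine mem_tangent 2 3 ((hX1 0).mul (hX1 4)) (hX 2 3) (by norm_num)
        (mul_ne_zero (hne _) (hne _)) ?_
      rw [RingHom.mem_ker, hφ]
      simp
      ring
end

section
/- Let K be a field and let J = ⟨x_5^2, x_4, x_3^3x_5, x_3^6, x_1x_5⟩ ⊂ K[x_1,…,x_5]. Then the Hilbert function H of K[x_1,…,x_5]/J satisfies H(0) = 1, H(1) = 4, H(2) = 8, H(3) = 13, and H(r) = 6r − 6 for all r ≥ 4; in particular, H is non-decreasing. -/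
open MvPolynomial

/-- The Hilbert function of `P/J` for an ideal `J` of a polynomial ring `P`:
`H_J(k) = dim_K P_k − dim_K (J ∩ P_k)`. -/
noncomputable def hilbertFn {K : Type*} [Field K] {σ : Type*}
    (J : Ideal (MvPolynomial σ K)) (k : ℕ) : ℕ :=
  Module.finrank K (homogeneousSubmodule σ K k) -
    Module.finrank K
      (Submodule.restrictScalars K J ⊓ homogeneousSubmodule σ K k :
        Submodule K (MvPolynomial σ K))

/-- Exponents of monomials lying in the ideal. -/
def badExp : Set (Fin 5 →₀ ℕ) :=
  {d | 2 ≤ d 4 ∨ 1 ≤ d 3 ∨ (3 ≤ d 2 ∧ 1 ≤ d 4) ∨ 6 ≤ d 2 ∨ (1 ≤ d 0 ∧ 1 ≤ d 4)}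

/-- Exponents of total degree `r`. -/
def degExp (r : ℕ) : Set (Fin 5 →₀ ℕ) := {d | d.degree = r}

lemma degExp_finite (r : ℕ) : (degExp r).Finite :=
  (Finsupp.finite_of_degree_le r).subset fun _ h => le_of_eq h

lemma finrank_restrictSupport_eq {K : Type*} [Field K] (s : Set (Fin 5 →₀ ℕ)) :
    Module.finrank K (restrictSupport K s) = s.ncard := by
  rw [Module.finrank_eq_nat_card_basis (basisRestrictSupport K s)]
  rfl

lemma homog_eq {K : Type*} [Field K] (r : ℕ) :
    homogeneousSubmodule (Fin 5) K r = restrictSupport K (degExp r) :=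
  homogeneousSubmodule_eq_finsupp_supported _ _ r

lemma span_eq_image (K : Type*) [Field K] :
    ({X 4 ^ 2, X 3, X 2 ^ 3 * X 4, X 2 ^ 6, X 0 * X 4} : Set (MvPolynomial (Fin 5) K)) =
    (fun s => monomial s (1 : K)) '' {Finsupp.single 4 2, Finsupp.single 3 1,
      Finsupp.single 2 3 + Finsupp.single 4 1, Finsupp.single 2 6,
      Finsupp.single 0 1 + Finsupp.single 4 1} := by
  simp only [Set.image_insert_eq, Set.image_singleton, X, monomial_pow, monomial_mul, one_pow,
    mul_one, Finsupp.smul_single, smul_eq_mul]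

lemma mem_J {K : Type*} [Field K] (p : MvPolynomial (Fin 5) K) :
    p ∈ Ideal.span ({X 4 ^ 2, X 3, X 2 ^ 3 * X 4, X 2 ^ 6, X 0 * X 4} :
      Set (MvPolynomial (Fin 5) K)) ↔ ∀ d ∈ p.support, d ∈ badExp := by
  rw [span_eq_image, mem_ideal_span_monomial_image]
  refine forall₂_congr fun d _ => ?_
  simp [badExp, Finsupp.le_def, Fin.forall_fin_succ, Finsupp.single_apply]

lemma inf_eq {K : Type*} [Field K] (r : ℕ) :
    (Submodule.restrictScalars K (Ideal.span ({X 4 ^ 2, X 3, X 2 ^ 3 * X 4, X 2 ^ 6, X 0 * X 4} :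
      Set (MvPolynomial (Fin 5) K))) ⊓ homogeneousSubmodule (Fin 5) K r :
        Submodule K (MvPolynomial (Fin 5) K)) = restrictSupport K (badExp ∩ degExp r) := by
  ext p
  rw [Submodule.mem_inf, Submodule.restrictScalars_mem, mem_J, homog_eq,
    mem_restrictSupport_iff, mem_restrictSupport_iff, Set.subset_inter_iff]
  rfl

/-- Parameter set for the standard monomials of degree `r`: `⟨(e, c), a⟩` are the exponents of
`X 4`, `X 2`, `X 0`. -/
def stdIdx (r : ℕ) : Finset (Σ _ : ℕ × ℕ, ℕ) :=
  (Finset.range 2 ×ˢ Finset.range 6).sigma fun q =>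
    Finset.range (if q.1 = 0 then r + 1 - q.2 else if q.2 < 3 ∧ q.2 + 1 ≤ r then 1 else 0)

/-- The exponent attached to a parameter. -/
noncomputable def stdExp (r : ℕ) (q : Σ _ : ℕ × ℕ, ℕ) : Fin 5 →₀ ℕ :=
  Finsupp.equivFunOnFinite.symm ![q.2, r - q.1.1 - q.1.2 - q.2, q.1.2, 0, q.1.1]

lemma std_image (r : ℕ) : degExp r \ badExp = stdExp r '' (stdIdx r : Set _) := by
  ext d
  simp only [Set.mem_sdiff, degExp, badExp, Set.mem_ofPred_eq, Finsupp.degree_eq_sum,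
    Fin.sum_univ_five, Set.mem_image, Finset.mem_coe, stdIdx, Finset.mem_sigma,
    Finset.mem_product, Finset.mem_range]
  constructor
  · rintro ⟨h1, h2⟩
    refine ⟨⟨(d 4, d 2), d 0⟩, ?_, ?_⟩
    · dsimp only
      split_ifs <;> omega
    · ext i
      fin_cases i <;> simp [stdExp] <;> omega
  · rintro ⟨⟨⟨e, c⟩, a⟩, h, rfl⟩
    dsimp only at h
    simp [stdExp]
    split_ifs at h <;> omega

lemma std_inj (r : ℕ) : Set.InjOn (stdExp r) (stdIdx r : Set _) := by
  rintro ⟨⟨e, c⟩, a⟩ _ ⟨⟨e', c'⟩, a'⟩ _ h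
  have h0 := DFunLike.congr_fun h 0
  have h2 := DFunLike.congr_fun h 2
  have h4 := DFunLike.congr_fun h 4
  simp [stdExp] at h0 h2 h4
  subst h0 h2 h4
  rfl

lemma hilbert_eq {K : Type*} [Field K] (r : ℕ) :
    hilbertFn (Ideal.span ({X 4 ^ 2, X 3, X 2 ^ 3 * X 4, X 2 ^ 6, X 0 * X 4} :
      Set (MvPolynomial (Fin 5) K))) r = (stdIdx r).card := by
  rw [hilbertFn, inf_eq, homog_eq, finrank_restrictSupport_eq, finrank_restrictSupport_eq,
    ← Set.ncard_coe_finset, ← Set.InjOn.ncard_image (std_inj r), ← std_image,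
    ← Set.ncard_inter_add_ncard_sdiff_eq_ncard (degExp r) badExp (degExp_finite r), Set.inter_comm]
  omega

lemma card_std (r : ℕ) : (stdIdx r).card =
    if r = 0 then 1 else if r = 1 then 4 else if r = 2 then 8 else if r = 3 then 13
      else 6 * r - 6 := by
  simp only [stdIdx, Finset.card_sigma, Finset.sum_product, Finset.sum_range_succ,
    Finset.sum_range_zero, Finset.card_range, if_true, one_ne_zero, if_false]
  split_ifs <;> omega

/-- For `J = ⟨x_5^2, x_4, x_3^3x_5, x_3^6, x_1x_5⟩ ⊂ K[x_1,…,x_5]`,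
the Hilbert function `H` of `K[x_1,…,x_5]/J` satisfies `H(0)=1`, `H(1)=4`,
`H(2)=8`, `H(3)=13`, and `H(r)=6r−6` for all `r ≥ 4`; in particular `H` is
non-decreasing. -/
theorem stmt_14 (K : Type*) [Field K]
    (J : Ideal (MvPolynomial (Fin 5) K))
    (hJ : J = Ideal.span {X 4 ^ 2, X 3, X 2 ^ 3 * X 4, X 2 ^ 6, X 0 * X 4}) :
    hilbertFn J 0 = 1 ∧ hilbertFn J 1 = 4 ∧ hilbertFn J 2 = 8 ∧
      hilbertFn J 3 = 13 ∧ (∀ r : ℕ, 4 ≤ r → hilbertFn J r = 6 * r - 6) ∧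
      Monotone (hilbertFn J) := by
  subst hJ
  refine ⟨?_, ?_, ?_, ?_, ?_, ?_⟩
  iterate 4 simp [hilbert_eq, card_std]
  · intro r hr
    rw [hilbert_eq, card_std]
    split_ifs <;> omega
  · refine monotone_nat_of_le_succ fun r => ?_
    rw [hilbert_eq, hilbert_eq, card_std, card_std]
    obtain h | h | h | h | h : r = 0 ∨ r = 1 ∨ r = 2 ∨ r = 3 ∨ 4 ≤ r := by omega
    iterate 4 (· subst h; simp)
    rw [if_neg (by omega), if_neg (by omega), if_neg (by omega), if_neg (by omega),
      if_neg (by omega), if_neg (by omega), if_neg (by omega), if_neg (by omega)]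
    exact Nat.sub_le_sub_right (by omega) 6
end
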